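/- arXiv:1902.09146 — 2 statements merged into one kernel-verified Lean document; each statement's English description precedes it below -/
import Mathlib

section
/- Let n ≥ 1, d ≥ 4 and 1 ≤ k ≤ d/2 − 1. There exists a nonempty Zariski-open subset U of R_d = ℂ[x_0,…,x_n]_d such that for all f, g ∈ U: if the k-th order Milnor algebras M^k(f) and M^k(g) are isomorphic as graded ℂ-algebras, then the hypersurfaces V(f) and V(g) are projectively equivalent, i.e., there exist φ ∈ GL_{n+1}(ℂ) and c ∈ ℂ∖{0} such that g = c·(f ∘ φ). -/
open MvPolynomial Module

/-- The differential operator `∂^α` on `ℂ[x_0,…,x_{N-1}]` given by a multi-index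
`α : Fin N → ℕ`. -/
noncomputable def pd {N : ℕ} (α : Fin N → ℕ) :
    Module.End ℂ (MvPolynomial (Fin N) ℂ) :=
  (List.ofFn fun i =>
    ((MvPolynomial.pderiv (R := ℂ) i).toLinearMap :
      Module.End ℂ (MvPolynomial (Fin N) ℂ)) ^ (α i)).prod

/-- The `k`-th order Jacobian ideal `J^k(f)`, generated by all partial
derivatives `∂^α f` with `|α| = k`. -/
noncomputable def milnorIdeal {N : ℕ} (f : MvPolynomial (Fin N) ℂ) (k : ℕ) :
    Ideal (MvPolynomial (Fin N) ℂ) :=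
  Ideal.span {g | ∃ α : Fin N → ℕ, (∑ i, α i) = k ∧ g = pd α f}

/-- The degree-`m` graded piece of the quotient `R ⧸ I`, namely the image of the
space of homogeneous polynomials of degree `m`. -/
noncomputable def gradedPiece {N : ℕ} (I : Ideal (MvPolynomial (Fin N) ℂ)) (m : ℕ) :
    Submodule ℂ (MvPolynomial (Fin N) ℂ ⧸ I) :=
  Submodule.map (Ideal.Quotient.mkₐ ℂ I).toLinearMap (homogeneousSubmodule (Fin N) ℂ m)

/-- Linear substitution: `linSubst M f = f ∘ M`, i.e. `(linSubst M f)(x) = f(Mx)`. -/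
noncomputable def linSubst {N : ℕ} (M : Matrix (Fin N) (Fin N) ℂ)
    (f : MvPolynomial (Fin N) ℂ) : MvPolynomial (Fin N) ℂ :=
  aeval (fun j => ∑ l, MvPolynomial.C (M j l) * X l) f

/-! For generic `f` the partial derivatives of order `k + 1` are linearly independent. This
condition is open, and it is not empty: take `f = ∑ p ^ d`, the sum over the linear forms `p` with
coefficients in `{1, …, k + 2}`. If `θ(∂) f = 0` with `θ` of degree `k + 1`, applying
`x₀ ^ r * conj θ` as well (`d = 2 * (k + 1) + r`) gives `∑ p₀ ^ r * ‖θ p‖ ^ 2 = 0`, so `θ` vanishes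
on the whole grid of coefficient vectors, which is too large for a nonzero `θ`.

As `J^k(f)` is generated in degree `d - k ≥ 2`, it contains no linear form, so a graded isomorphism
`M^k(f) ≃ M^k(g)` comes from an invertible linear substitution. Pull `g` back along it to `F`: in
degree `d - k`, every `k`-th order partial of `F` is a combination of those of `f`. Symmetry of
mixed derivatives together with independence lets this inclusion descend one order at a time, and
in order `0` it says that `F` is a multiple of `f`. -/

/-! ### Homogeneous polynomials -/

section

variable {σ R : Type*} [CommSemiring R]

theorem homogeneousSubmodule_le {V : ℕ → Submodule R (MvPolynomial σ R)} (one_mem : 1 ∈ V 0)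
    (X_mul_mem : ∀ m i, ∀ p ∈ V m, X i * p ∈ V (m + 1)) (m : ℕ) :
    homogeneousSubmodule σ R m ≤ V m := by
  induction m with
  | zero => rwa [homogeneousSubmodule_zero, Submodule.one_le]
  | succ m ih =>
    rw [← homogeneousSubmodule_one_pow, pow_succ', homogeneousSubmodule_one_pow,
      homogeneousSubmodule_one_eq_span_X, Submodule.mul_le]
    intro ℓ hℓ p hp
    induction hℓ using Submodule.span_induction with
    | mem _ h => obtain ⟨i, rfl⟩ := h; exact X_mul_mem m i p (ih hp)
    | zero => simp
    | add _ _ _ _ h₁ h₂ => rw [add_mul]; exact add_mem h₁ h₂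
    | smul a _ _ h => rw [smul_mul_assoc]; exact Submodule.smul_mem _ a h

theorem isHomogeneous_X_mul_iff {i : σ} {p : MvPolynomial σ R} {m : ℕ} :
    (X i * p).IsHomogeneous (m + 1) ↔ p.IsHomogeneous m := by
  refine ⟨fun h β hβ => ?_, fun h => add_comm 1 m ▸ (isHomogeneous_X R i).mul h⟩
  have hβ' := h (d := Finsupp.single i 1 + β) (by rwa [coeff_X_mul])
  change (Finsupp.weight fun _ => 1) β = m
  rw [Pi.one_def] at hβ'
  rw [← Finsupp.degree_eq_weight_one] at hβ' ⊢
  rw [map_add, Finsupp.degree_single] at hβ'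
  lia

theorem homogeneousComponent_mul_of_le {p q : MvPolynomial σ R} {i e : ℕ}
    (hq : q.IsHomogeneous e) (hi : i ≤ e) :
    homogeneousComponent i (p * q) = coeff 0 p • homogeneousComponent i q := by
  induction p using MvPolynomial.induction_on generalizing q e with
  | C a => rw [homogeneousComponent_C_mul, coeff_zero_C, C_mul']
  | add p₁ p₂ h₁ h₂ => rw [add_mul, map_add, h₁ hq hi, h₂ hq hi, coeff_add, add_smul]
  | mul_X p j h =>
    have hXq : (X j * q).IsHomogeneous (e + 1) := isHomogeneous_X_mul_iff.mpr hq
    rw [mul_assoc, h hXq (by lia), homogeneousComponent_of_mem hXq, if_neg (by lia), smul_zero,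
      ← constantCoeff_eq, map_mul, constantCoeff_X, mul_zero, zero_smul]

theorem mem_of_isHomogeneous_of_mem_ideal_span {V : Submodule R (MvPolynomial σ R)} {i e : ℕ}
    (hV : V ≤ homogeneousSubmodule σ R e) (hi : i ≤ e) {q : MvPolynomial σ R}
    (hq : q.IsHomogeneous i) (hqV : q ∈ Ideal.span (V : Set (MvPolynomial σ R))) : q ∈ V := by
  rw [← homogeneousComponent_eq_self hq]
  clear hq
  induction hqV using Submodule.closure_induction with
  | zero => simp
  | add _ _ _ _ h₁ h₂ => rw [map_add]; exact add_mem h₁ h₂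
  | smul_mem a v hv =>
    rw [smul_eq_mul, homogeneousComponent_mul_of_le (hV hv) hi,
      homogeneousComponent_of_mem (hV hv)]
    split_ifs
    · exact V.smul_mem _ hv
    · simp

end

/-! ### Polynomials as differential operators -/

section

variable {σ R : Type*} [CommRing R]

theorem eq_zero_of_forall_pderiv_eq_zero [Finite σ] [IsDomain R] [CharZero R]
    {p : MvPolynomial σ R} {m : ℕ} (hp : p.IsHomogeneous m) (hm : m ≠ 0)
    (h : ∀ i, pderiv i p = 0) : p = 0 := by
  cases nonempty_fintype σ
  have euler := hp.sum_X_mul_pderiv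
  simpa [h, hm, eq_comm] using euler

theorem commute_pderiv (i j : σ) :
    Commute ((pderiv i).toLinearMap : Module.End R (MvPolynomial σ R)) (pderiv j).toLinearMap := by
  have h : ⁅pderiv (R := R) i, pderiv j⁆ = 0 := derivation_ext fun l => by
    classical
    rw [Derivation.commutator_apply, pderiv_X, pderiv_X]
    simp only [Pi.single_apply]
    split_ifs <;> simp
  rw [commute_iff_lie_eq, ← Derivation.commutator_coe_linear_map, h]
  rfl

variable (σ R) in
/-- The commutative algebra of differential operators with constant coefficients, generated by the
partial derivatives; the noncommutative ring `Module.End` itself is not a target for `aeval`. -/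
noncomputable def diffOpAlgebra : Subalgebra R (Module.End R (MvPolynomial σ R)) :=
  Algebra.adjoin R (Set.range fun i => (pderiv i).toLinearMap)

instance : IsMulCommutative (diffOpAlgebra σ R) :=
  Algebra.isMulCommutative_adjoin R <| by rintro _ ⟨i, rfl⟩ _ ⟨j, rfl⟩; exact commute_pderiv i j

open scoped IsMulCommutative in
/-- The polynomial `θ` acting as the differential operator `θ(∂)`, so that the monomial
`monomial α 1` acts as `∂^α`. -/
noncomputable def diffOp : MvPolynomial σ R →ₐ[R] Module.End R (MvPolynomial σ R) :=
  (diffOpAlgebra σ R).val.comp <|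
    aeval fun i => ⟨(pderiv i).toLinearMap, Algebra.subset_adjoin (Set.mem_range_self i)⟩

theorem diffOp_X (i : σ) : diffOp (X i) = (pderiv (R := R) i).toLinearMap := by
  simp [diffOp]

theorem diffOp_mul (θ η f : MvPolynomial σ R) : diffOp (θ * η) f = diffOp θ (diffOp η f) := by
  rw [map_mul, Module.End.mul_apply]

theorem diffOp_X_mul (i : σ) (θ f : MvPolynomial σ R) :
    diffOp (X i * θ) f = pderiv i (diffOp θ f) := by
  rw [diffOp_mul, diffOp_X]; rfl

theorem isHomogeneous_diffOp {θ f : MvPolynomial σ R} {j d : ℕ} (hθ : θ.IsHomogeneous j)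
    (hf : f.IsHomogeneous d) : (diffOp θ f).IsHomogeneous (d - j) := by
  have key := homogeneousSubmodule_le
    (V := fun j => (homogeneousSubmodule σ R (d - j)).comap (diffOp.toLinearMap.flip f))
    (by simpa using hf) fun j i θ hθ => by
      rw [Submodule.mem_comap, LinearMap.flip_apply, AlgHom.toLinearMap_apply,
        mem_homogeneousSubmodule] at hθ ⊢
      rw [diffOp_X_mul, ← Nat.sub_sub]
      exact hθ.pderiv
  exact key j hθ

theorem exists_eval_coeff_eq_coeff_diffOp (θ : MvPolynomial σ R) (γ : σ →₀ ℕ) :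
    ∃ L : MvPolynomial (σ →₀ ℕ) R, ∀ f, eval (fun β => coeff β f) L = coeff γ (diffOp θ f) := by
  induction θ using MvPolynomial.induction_on generalizing γ with
  | C a => exact ⟨C a * X γ, fun f => by simp⟩
  | add θ₁ θ₂ h₁ h₂ =>
    obtain ⟨L₁, hL₁⟩ := h₁ γ
    obtain ⟨L₂, hL₂⟩ := h₂ γ
    exact ⟨L₁ + L₂, fun f => by simp [hL₁, hL₂]⟩
  | mul_X θ i h =>
    obtain ⟨L, hL⟩ := h (γ + Finsupp.single i 1)
    exact ⟨L * C (γ i + 1 : R), fun f => by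
      rw [mul_comm θ, diffOp_X_mul, coeff_pderiv, map_mul, hL, eval_C]⟩

/-- The span over `R` of the partial derivatives of order `k` of `f`, encoded as the set of all
`θ(∂) f` with `θ` homogeneous of degree `k`. -/
noncomputable def partialSpan (f : MvPolynomial σ R) (k : ℕ) : Submodule R (MvPolynomial σ R) :=
  (homogeneousSubmodule σ R k).map (diffOp.toLinearMap.flip f)

theorem diffOp_mem_partialSpan {θ : MvPolynomial σ R} {k : ℕ} (hθ : θ.IsHomogeneous k)
    (f : MvPolynomial σ R) : diffOp θ f ∈ partialSpan f k :=
  Submodule.mem_map_of_mem (f := diffOp.toLinearMap.flip f) hθ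

theorem exists_of_mem_partialSpan {f q : MvPolynomial σ R} {k : ℕ} (hq : q ∈ partialSpan f k) :
    ∃ θ : MvPolynomial σ R, θ.IsHomogeneous k ∧ diffOp θ f = q := hq

theorem partialSpan_zero (f : MvPolynomial σ R) : partialSpan f 0 = R ∙ f := by
  rw [partialSpan, homogeneousSubmodule_zero, Submodule.one_eq_span, Submodule.map_span,
    Set.image_singleton]
  simp

theorem partialSpan_le_homogeneousSubmodule {f : MvPolynomial σ R} {d : ℕ}
    (hf : f.IsHomogeneous d) (k : ℕ) : partialSpan f k ≤ homogeneousSubmodule σ R (d - k) := by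
  intro q hq
  obtain ⟨θ, hθ, rfl⟩ := exists_of_mem_partialSpan hq
  exact isHomogeneous_diffOp hθ hf

theorem partialSpan_eq_span (f : MvPolynomial σ R) (k : ℕ) :
    partialSpan f k =
      Submodule.span R ((fun α => diffOp (monomial α 1) f) '' {α : σ →₀ ℕ | α.degree = k}) := by
  rw [partialSpan, homogeneousSubmodule_eq_finsupp_supported,
    AddMonoidAlgebra.supported_eq_span_single, Submodule.map_span, Set.image_image]
  simp only [single_eq_monomial, LinearMap.flip_apply, AlgHom.toLinearMap_apply]

end

/-! ### Descending the order of the partial derivatives -/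

section

variable {σ R : Type*} [CommRing R]

/-- The partial derivatives of order `m` of `g`, indexed by the monomials of degree `m`, are
linearly independent: no nonzero homogeneous `θ` of degree `m` gives `θ(∂) g = 0`. -/
def PartialsIndep (g : MvPolynomial σ R) (m : ℕ) : Prop :=
  ∀ θ : MvPolynomial σ R, θ.IsHomogeneous m → diffOp θ g = 0 → θ = 0

variable [IsDomain R]

theorem PartialsIndep.ne_zero [Nonempty σ] {g : MvPolynomial σ R} {m : ℕ}
    (h : PartialsIndep g m) : g ≠ 0 := by
  rintro rfl
  obtain ⟨i⟩ := ‹Nonempty σ›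
  exact pow_ne_zero m (X_ne_zero i) (h _ (isHomogeneous_X_pow i m) (map_zero _))

theorem PartialsIndep.of_succ [Nonempty σ] {g : MvPolynomial σ R} {m : ℕ}
    (h : PartialsIndep g (m + 1)) : PartialsIndep g m := by
  intro θ hθ hθg
  obtain ⟨i⟩ := ‹Nonempty σ›
  have hXθ : X i * θ = 0 :=
    h _ (isHomogeneous_X_mul_iff.mpr hθ) (by rw [diffOp_X_mul, hθg, map_zero])
  exact (mul_eq_zero.mp hXθ).resolve_left (X_ne_zero i)

theorem exists_eq_X_mul_of_X_mul_comm [Nontrivial σ] {η : σ → MvPolynomial σ R}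
    (h : ∀ i l, X l * η i = X i * η l) : ∃ ζ, ∀ i, η i = X i * ζ := by
  obtain ⟨i, l, hil⟩ := exists_pair_ne σ
  have hdvd : X i ∣ X l * η i := ⟨η l, h i l⟩
  obtain ⟨ζ, hζ⟩ := (X_dvd_mul_iff.mp hdvd).resolve_left fun hi => hil (X_dvd_X.mp hi)
  refine ⟨ζ, fun j => mul_left_cancel₀ (X_ne_zero i) ?_⟩
  rw [← h, hζ, mul_left_comm]

variable [Finite σ] [Nontrivial σ] [CharZero R]

/-- By independence the operators `ηᵢ` with `∂ᵢ θ(∂) F = ηᵢ(∂) G` satisfy `Xₗ ηᵢ = Xᵢ ηₗ`, hence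
`ηᵢ = Xᵢ ζ`, and `θ(∂) F - ζ(∂) G` has vanishing gradient. -/
theorem partialSpan_le_of_partialSpan_succ_le {F G : MvPolynomial σ R} {d j : ℕ}
    (hF : F.IsHomogeneous d) (hG : G.IsHomogeneous d) (hj : j < d)
    (hind : PartialsIndep G (j + 2)) (hle : partialSpan F (j + 1) ≤ partialSpan G (j + 1)) :
    partialSpan F j ≤ partialSpan G j := by
  intro q hq
  obtain ⟨θ, hθ, rfl⟩ := exists_of_mem_partialSpan hq
  choose η hη hηF using fun i => exists_of_mem_partialSpan
    (hle (diffOp_mem_partialSpan (isHomogeneous_X_mul_iff.mpr hθ : (X i * θ).IsHomogeneous _) F))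
  have hcomm : ∀ i l, X l * η i = X i * η l := fun i l => sub_eq_zero.mp <| by
    refine hind _ ((isHomogeneous_X_mul_iff.mpr (hη i)).sub
      (isHomogeneous_X_mul_iff.mpr (hη l))) ?_
    rw [map_sub, LinearMap.sub_apply, diffOp_X_mul, diffOp_X_mul, hηF, hηF, ← diffOp_X_mul,
      ← diffOp_X_mul, mul_left_comm, sub_self]
  obtain ⟨ζ, hζ⟩ := exists_eq_X_mul_of_X_mul_comm hcomm
  have hζj : ζ.IsHomogeneous j :=
    isHomogeneous_X_mul_iff.mp (hζ (Classical.arbitrary σ) ▸ hη (Classical.arbitrary σ))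
  have hθζ : diffOp θ F - diffOp ζ G = 0 :=
    eq_zero_of_forall_pderiv_eq_zero
      ((isHomogeneous_diffOp hθ hF).sub (isHomogeneous_diffOp hζj hG)) (by lia) fun i => by
        rw [map_sub, ← diffOp_X_mul, ← diffOp_X_mul, ← hηF, hζ, sub_self]
  rw [sub_eq_zero.mp hθζ]
  exact diffOp_mem_partialSpan hζj G

theorem mem_span_singleton_of_partialSpan_le {F G : MvPolynomial σ R} {d k : ℕ}
    (hF : F.IsHomogeneous d) (hG : G.IsHomogeneous d) (hk : k ≤ d)
    (hind : PartialsIndep G (k + 1)) (hle : partialSpan F k ≤ partialSpan G k) : F ∈ R ∙ G := by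
  induction k with
  | zero =>
    rw [partialSpan_zero, partialSpan_zero] at hle
    exact hle (Submodule.mem_span_singleton_self F)
  | succ k ih =>
    exact ih (by lia) hind.of_succ (partialSpan_le_of_partialSpan_succ_le hF hG hk hind hle)

end

/-! ### Linear substitutions -/

section

variable {σ τ R : Type*}

section

variable [CommSemiring R]

theorem pderiv_bind₁ [Fintype σ] (φ : σ → MvPolynomial τ R) (l : τ)
    (p : MvPolynomial σ R) :
    pderiv l (bind₁ φ p) = ∑ i, bind₁ φ (pderiv i p) * pderiv l (φ i) := by
  classical
  induction p using MvPolynomial.induction_on with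
  | C a => simp
  | add p q hp hq => simp only [map_add, hp, hq, add_mul, Finset.sum_add_distrib]
  | mul_X p j hp =>
    simp only [map_mul, bind₁_X_right, pderiv_mul, hp, pderiv_X, map_add, add_mul,
      Finset.sum_add_distrib, Finset.sum_mul]
    refine congrArg₂ (· + ·) ?_ ?_
    · exact Finset.sum_congr rfl fun i _ => by ring
    · simp [Pi.single_apply]

theorem toMvPolynomial_eq_sum_smul_X [Fintype τ] (M : Matrix σ τ R) (i : σ) :
    M.toMvPolynomial i = ∑ j, M i j • X j := by
  simp only [Matrix.toMvPolynomial, ← C_mul_X_eq_monomial, C_mul']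

theorem pderiv_toMvPolynomial [Fintype τ] (M : Matrix σ τ R) (i : σ) (l : τ) :
    pderiv l (M.toMvPolynomial i) = C (M i l) := by
  classical
  simp [toMvPolynomial_eq_sum_smul_X, pderiv_X, Pi.single_apply, smul_eq_C_mul]

theorem isHomogeneous_bind₁_toMvPolynomial [Fintype τ] (M : Matrix σ τ R)
    {f : MvPolynomial σ R} {m : ℕ} (hf : f.IsHomogeneous m) :
    (bind₁ M.toMvPolynomial f).IsHomogeneous m := by
  have h := hf.aeval M.toMvPolynomial M.toMvPolynomial_isHomogeneous
  rwa [one_mul] at h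

theorem bind₁_toMvPolynomial_of_mul_eq_one [Fintype τ] [Fintype σ] [DecidableEq σ]
    {M : Matrix σ τ R} {M' : Matrix τ σ R} (h : M * M' = 1) (f : MvPolynomial σ R) :
    bind₁ M'.toMvPolynomial (bind₁ M.toMvPolynomial f) = f := by
  simp only [bind₁_bind₁, ← Matrix.toMvPolynomial_mul, h, Matrix.toMvPolynomial_one, bind₁_X_left,
    AlgHom.id_apply]

theorem toMvPolynomial_injective [Fintype τ] : Function.Injective
    (Matrix.toMvPolynomial : Matrix σ τ R → σ → MvPolynomial τ R) := by
  intro M M' h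
  ext i l
  simpa [pderiv_toMvPolynomial] using congrArg (pderiv l) (congrFun h i)

theorem exists_toMvPolynomial_of_isHomogeneous_one [Fintype τ] {ℓ : σ → MvPolynomial τ R}
    (hℓ : ∀ i, (ℓ i).IsHomogeneous 1) : ∃ M : Matrix σ τ R, M.toMvPolynomial = ℓ := by
  simp only [← mem_homogeneousSubmodule, homogeneousSubmodule_one_eq_span_X,
    Submodule.mem_span_range_iff_exists_fun] at hℓ
  choose M hM using hℓ
  refine ⟨Matrix.of M, funext fun i => ?_⟩
  rw [toMvPolynomial_eq_sum_smul_X, ← hM i]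
  simp only [Matrix.of_apply]

end

variable [CommRing R]

theorem diffOp_bind₁_toMvPolynomial [Fintype σ] [Fintype τ] (M : Matrix σ τ R)
    (θ : MvPolynomial τ R) (f : MvPolynomial σ R) :
    diffOp θ (bind₁ M.toMvPolynomial f) =
      bind₁ M.toMvPolynomial (diffOp (bind₁ M.transpose.toMvPolynomial θ) f) := by
  induction θ using MvPolynomial.induction_on with
  | C a => simp
  | add θ η hθ hη => simp only [map_add, LinearMap.add_apply, hθ, hη]
  | mul_X θ l hθ =>
    have hX : bind₁ M.transpose.toMvPolynomial (θ * X l) =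
        ∑ i, M i l • (X i * bind₁ M.transpose.toMvPolynomial θ) := by
      rw [mul_comm θ, map_mul, bind₁_X_right, toMvPolynomial_eq_sum_smul_X, Finset.sum_mul]
      simp only [smul_mul_assoc, Matrix.transpose_apply]
    rw [hX, mul_comm θ, diffOp_X_mul, hθ, pderiv_bind₁]
    simp only [pderiv_toMvPolynomial, map_sum, map_smul, LinearMap.sum_apply,
      LinearMap.smul_apply, diffOp_X_mul, mul_comm _ (C _), C_mul']

theorem partialSpan_bind₁_toMvPolynomial_le [Finite σ] [Fintype τ] (M : Matrix σ τ R)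
    (f : MvPolynomial σ R) (k : ℕ) :
    partialSpan (bind₁ M.toMvPolynomial f) k ≤
      (partialSpan f k).map (bind₁ M.toMvPolynomial).toLinearMap := by
  cases nonempty_fintype σ
  intro q hq
  obtain ⟨θ, hθ, rfl⟩ := exists_of_mem_partialSpan hq
  rw [diffOp_bind₁_toMvPolynomial]
  exact Submodule.mem_map_of_mem (f := (bind₁ M.toMvPolynomial).toLinearMap)
    (diffOp_mem_partialSpan (isHomogeneous_bind₁_toMvPolynomial _ hθ) f)

theorem exists_matrix_lift_algHom [Fintype τ] {I : Ideal (MvPolynomial σ R)}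
    {J : Ideal (MvPolynomial τ R)}
    (e : (MvPolynomial σ R ⧸ I) →ₐ[R] (MvPolynomial τ R ⧸ J))
    (he : ∀ i, ∃ ℓ : MvPolynomial τ R, ℓ.IsHomogeneous 1 ∧
      Ideal.Quotient.mk J ℓ = e (Ideal.Quotient.mk I (X i))) :
    ∃ M : Matrix σ τ R, ∀ p,
      e (Ideal.Quotient.mk I p) = Ideal.Quotient.mk J (bind₁ M.toMvPolynomial p) := by
  choose ℓ hℓ heℓ using he
  obtain ⟨M, rfl⟩ := exists_toMvPolynomial_of_isHomogeneous_one hℓ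
  have hcomp : e.comp (Ideal.Quotient.mkₐ R I) =
      (Ideal.Quotient.mkₐ R J).comp (bind₁ M.toMvPolynomial) :=
    MvPolynomial.algHom_ext fun i => by simpa using (heℓ i).symm
  exact ⟨M, DFunLike.congr_fun hcomp⟩

theorem exists_units_matrix_lift_algEquiv [Fintype σ] [DecidableEq σ]
    {I J : Ideal (MvPolynomial σ R)} (hI : ∀ ℓ ∈ I, ℓ.IsHomogeneous 1 → ℓ = 0)
    (e : (MvPolynomial σ R ⧸ I) ≃ₐ[R] (MvPolynomial σ R ⧸ J))
    (he : ((homogeneousSubmodule σ R 1).map (Ideal.Quotient.mkₐ R I).toLinearMap).map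
        (e.toLinearEquiv : _ →ₗ[R] _) =
      (homogeneousSubmodule σ R 1).map (Ideal.Quotient.mkₐ R J).toLinearMap) :
    ∃ φ : (Matrix σ σ R)ˣ, ∀ p,
      e (Ideal.Quotient.mk I p) = Ideal.Quotient.mk J (bind₁ φ.val.toMvPolynomial p) := by
  have hmap : ∀ i, e (Ideal.Quotient.mk I (X i)) ∈
      (homogeneousSubmodule σ R 1).map (Ideal.Quotient.mkₐ R J).toLinearMap := fun i =>
    he ▸ Submodule.mem_map_of_mem (Submodule.mem_map_of_mem (isHomogeneous_X R i))
  have hmap' : ∀ i, ∃ ℓ : MvPolynomial σ R, ℓ.IsHomogeneous 1 ∧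
      Ideal.Quotient.mk I ℓ = e.symm (Ideal.Quotient.mk J (X i)) := fun i => by
    obtain ⟨_, ⟨ℓ, hℓ, rfl⟩, h⟩ := he.ge (Submodule.mem_map_of_mem (isHomogeneous_X R i))
    exact ⟨ℓ, hℓ, e.eq_symm_apply.mpr h⟩
  obtain ⟨M, hM⟩ := exists_matrix_lift_algHom e.toAlgHom hmap
  obtain ⟨M', hM'⟩ := exists_matrix_lift_algHom e.symm.toAlgHom hmap'
  have hMM' : M * M' = 1 := toMvPolynomial_injective <| funext fun i => by
    rw [Matrix.toMvPolynomial_mul, Matrix.toMvPolynomial_one, ← sub_eq_zero]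
    refine hI _ ?_ (.sub ?_ (isHomogeneous_X R i))
    · rw [← Ideal.Quotient.eq, ← bind₁_X_right M.toMvPolynomial i, ← hM', ← hM]
      exact e.symm_apply_apply _
    · exact isHomogeneous_bind₁_toMvPolynomial _ (M.toMvPolynomial_isHomogeneous i)
  exact ⟨⟨M, M', hMM', mul_eq_one_comm.mp hMM'⟩, hM⟩

end

/-! ### Reconstruction from the Milnor algebra -/

section

variable {N : ℕ}

theorem linSubst_eq_bind₁_toMvPolynomial (M : Matrix (Fin N) (Fin N) ℂ)
    (f : MvPolynomial (Fin N) ℂ) : linSubst M f = bind₁ M.toMvPolynomial f := by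
  simp only [linSubst, bind₁, funext (toMvPolynomial_eq_sum_smul_X M), C_mul']

theorem pd_eq_diffOp_monomial (α : Fin N →₀ ℕ) : pd α = diffOp (monomial α 1) := by
  have hα : (monomial α 1 : MvPolynomial (Fin N) ℂ) = (List.ofFn fun i => X i ^ α i).prod := by
    rw [List.prod_ofFn, monomial_eq, map_one, one_mul, Finsupp.prod_fintype _ _ (by simp)]
  simp only [hα, map_list_prod, List.map_ofFn, pd, Function.comp_def, map_pow, diffOp_X]

theorem milnorIdeal_eq_span_partialSpan (f : MvPolynomial (Fin N) ℂ) (k : ℕ) :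
    milnorIdeal f k = Ideal.span (partialSpan f k : Set (MvPolynomial (Fin N) ℂ)) := by
  rw [partialSpan_eq_span, milnorIdeal, Ideal.span, Ideal.span, Submodule.span_span_of_tower]
  congr 1
  ext q
  refine (Finsupp.equivFunOnFinite.exists_congr fun α => ?_).symm
  change _ ↔ ∑ i, α i = k ∧ q = pd α f
  rw [pd_eq_diffOp_monomial, ← Finsupp.degree_eq_sum, eq_comm (a := q), Set.mem_ofPred_eq]

theorem eq_zero_of_isHomogeneous_one_of_mem_milnorIdeal {f ℓ : MvPolynomial (Fin N) ℂ} {d k : ℕ}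
    (hf : f.IsHomogeneous d) (hk : k + 1 < d) (hℓ : ℓ ∈ milnorIdeal f k)
    (hℓ₁ : ℓ.IsHomogeneous 1) : ℓ = 0 := by
  rw [milnorIdeal_eq_span_partialSpan] at hℓ
  have hle := partialSpan_le_homogeneousSubmodule hf k
  have hmem := mem_of_isHomogeneous_of_mem_ideal_span hle (by lia) hℓ₁ hℓ
  by_contra h0
  have := hℓ₁.inj_right (hle hmem) h0
  lia

theorem partialSpan_bind₁_toMvPolynomial_le_of_forall_mem_milnorIdeal
    {f g : MvPolynomial (Fin N) ℂ} {d k : ℕ} (hf : f.IsHomogeneous d) (hg : g.IsHomogeneous d)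
    (M : Matrix (Fin N) (Fin N) ℂ)
    (h : ∀ p ∈ milnorIdeal g k, bind₁ M.toMvPolynomial p ∈ milnorIdeal f k) :
    partialSpan (bind₁ M.toMvPolynomial g) k ≤ partialSpan f k := by
  intro q hq
  obtain ⟨p, hp, rfl⟩ := partialSpan_bind₁_toMvPolynomial_le M g k hq
  have hpg : p ∈ milnorIdeal g k := by
    rw [milnorIdeal_eq_span_partialSpan]
    exact Ideal.subset_span hp
  have hmem := h p hpg
  rw [milnorIdeal_eq_span_partialSpan] at hmem
  exact mem_of_isHomogeneous_of_mem_ideal_span (partialSpan_le_homogeneousSubmodule hf k) le_rfl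
    (isHomogeneous_bind₁_toMvPolynomial M (partialSpan_le_homogeneousSubmodule hg k hp)) hmem

theorem exists_eq_C_mul_linSubst_of_milnorAlgebra_equiv [Nontrivial (Fin N)]
    {f g : MvPolynomial (Fin N) ℂ} {d k : ℕ} (hf : f.IsHomogeneous d) (hg : g.IsHomogeneous d)
    (hk : k + 1 < d) (hf_indep : PartialsIndep f (k + 1)) (hg₀ : g ≠ 0)
    (e : (MvPolynomial (Fin N) ℂ ⧸ milnorIdeal f k) ≃ₐ[ℂ]
      (MvPolynomial (Fin N) ℂ ⧸ milnorIdeal g k))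
    (he : (gradedPiece (milnorIdeal f k) 1).map (e.toLinearEquiv : _ →ₗ[ℂ] _) =
      gradedPiece (milnorIdeal g k) 1) :
    ∃ (φ : (Matrix (Fin N) (Fin N) ℂ)ˣ) (c : ℂ), c ≠ 0 ∧ g = C c * linSubst φ.val f := by
  obtain ⟨φ, hφ⟩ := exists_units_matrix_lift_algEquiv
    (fun ℓ => eq_zero_of_isHomogeneous_one_of_mem_milnorIdeal hf hk) e he
  have hφ_symm : ∀ p ∈ milnorIdeal g k, bind₁ (φ⁻¹).val.toMvPolynomial p ∈ milnorIdeal f k := by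
    intro p hp
    rw [← Ideal.Quotient.eq_zero_iff_mem, ← map_eq_zero_iff e e.injective, hφ,
      bind₁_toMvPolynomial_of_mul_eq_one φ.inv_mul, Ideal.Quotient.eq_zero_iff_mem]
    exact hp
  obtain ⟨c, hc⟩ := Submodule.mem_span_singleton.mp <|
    mem_span_singleton_of_partialSpan_le (isHomogeneous_bind₁_toMvPolynomial _ hg) hf (by lia)
      hf_indep (partialSpan_bind₁_toMvPolynomial_le_of_forall_mem_milnorIdeal hf hg _ hφ_symm)
  have hgf : g = C c * linSubst φ.val f := by
    rw [← bind₁_toMvPolynomial_of_mul_eq_one φ.inv_mul g, ← hc, map_smul, C_mul',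
      linSubst_eq_bind₁_toMvPolynomial]
  refine ⟨φ, c, ?_, hgf⟩
  rintro rfl
  exact hg₀ (by rw [hgf, C_0, zero_mul])

end

/-! ### Openness of independence -/

section

variable {τ κ ι σ K : Type*} [Field K]

theorem exists_mul_eq_one_of_mulVec_injective [Fintype κ] [Fintype ι] [DecidableEq ι]
    {A : Matrix κ ι K} (hA : Function.Injective A.mulVec) : ∃ B : Matrix ι κ K, B * A = 1 := by
  classical
  obtain ⟨L, hL⟩ := A.toLin'.exists_leftInverse_of_injective (LinearMap.ker_eq_bot.mpr hA)
  refine ⟨L.toMatrix', Matrix.toLin'.injective ?_⟩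
  rw [Matrix.toLin'_mul, Matrix.toLin'_toMatrix', hL, Matrix.toLin'_one]

theorem exists_polynomial_forall_mulVec_injective [Finite κ] [Fintype ι]
    {A : Matrix κ ι (MvPolynomial τ K)} {x₀ : τ → K}
    (h₀ : Function.Injective (A.map (eval x₀)).mulVec) :
    ∃ P, eval x₀ P ≠ 0 ∧ ∀ x, eval x P ≠ 0 → Function.Injective (A.map (eval x)).mulVec := by
  classical
  cases nonempty_fintype κ
  obtain ⟨B, hB⟩ := exists_mul_eq_one_of_mulVec_injective h₀
  let BA : Matrix ι ι (MvPolynomial τ K) := B.map C * A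
  have heval (x : τ → K) : eval x BA.det = (B * A.map (eval x)).det := by
    have hmap : BA.map (eval x) = (B.map C).map (eval x) * A.map (eval x) := Matrix.map_mul
    rw [RingHom.map_det, RingHom.mapMatrix_apply, hmap, Matrix.map_map]
    simp only [Function.comp_def, eval_C, Matrix.map_id']
  refine ⟨BA.det, by simp [heval, hB], fun x hx => ?_⟩
  have hBA : Function.Injective (B * A.map (eval x)).mulVec :=
    Matrix.mulVec_injective_of_det_ne_zero (heval x ▸ hx)
  refine Function.Injective.of_comp (f := B.mulVec) ?_
  simpa only [Function.comp_def, Matrix.mulVec_mulVec] using hBA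

theorem exists_matrix_partialsIndep_iff [Finite σ] (d m : ℕ) :
    ∃ A : Matrix {γ : σ →₀ ℕ | γ.degree = d - m} (Fin (finrank K (homogeneousSubmodule σ K m)))
        (MvPolynomial (σ →₀ ℕ) K),
      ∀ f : MvPolynomial σ K, f.IsHomogeneous d →
        (PartialsIndep f m ↔ Function.Injective (A.map (eval fun α => f.coeff α)).mulVec) := by
  have := Module.Finite.iff_fg.mpr (homogeneousSubmodule_fg σ K m)
  let b := finBasis K (homogeneousSubmodule σ K m)
  choose A hA using fun (γ : {γ : σ →₀ ℕ | γ.degree = d - m}) i =>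
    exists_eval_coeff_eq_coeff_diffOp (b i : MvPolynomial σ K) γ.val
  refine ⟨Matrix.of A, fun f hf => ?_⟩
  have hmulVec (v) : ((Matrix.of A).map (eval fun α => f.coeff α)).mulVec v =
      fun γ => coeff γ.val (diffOp (b.equivFun.symm v).val f) := by
    funext γ
    simp [Matrix.mulVec, dotProduct, hA, b.equivFun_symm_apply, coeff_sum, mul_comm]
  have hker (v) : ((Matrix.of A).map (eval fun α => f.coeff α)).mulVecLin v = 0 ↔
      diffOp (b.equivFun.symm v).val f = 0 := by
    rw [Matrix.mulVecLin_apply, hmulVec]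
    refine ⟨fun h => ext _ _ fun γ => ?_, fun h => by simp only [h, coeff_zero]; rfl⟩
    by_cases hγ : γ.degree = d - m
    · exact congrFun h ⟨γ, hγ⟩
    · exact (isHomogeneous_diffOp (b.equivFun.symm v).2 hf).coeff_eq_zero hγ
  rw [← Matrix.coe_mulVecLin, injective_iff_map_eq_zero]
  simp only [hker]
  refine ⟨fun h v hv => ?_, fun h θ hθ hθf => ?_⟩
  · exact b.equivFun.symm.map_eq_zero_iff.mp (Subtype.ext (h _ (b.equivFun.symm v).2 hv))
  · have hv := h (b.equivFun ⟨θ, hθ⟩) (by rwa [LinearEquiv.symm_apply_apply])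
    exact congrArg Subtype.val (b.equivFun.map_eq_zero_iff.mp hv)

theorem PartialsIndep.exists_polynomial [Finite σ] {f₀ : MvPolynomial σ K} {d m : ℕ}
    (hf₀ : f₀.IsHomogeneous d) (h₀ : PartialsIndep f₀ m) :
    ∃ P : MvPolynomial (σ →₀ ℕ) K, eval (fun α => f₀.coeff α) P ≠ 0 ∧
      ∀ f : MvPolynomial σ K, f.IsHomogeneous d → eval (fun α => f.coeff α) P ≠ 0 →
        PartialsIndep f m := by
  have := (Finsupp.finite_of_degree_eq (σ := σ) (d - m)).to_subtype
  obtain ⟨A, hA⟩ := exists_matrix_partialsIndep_iff (K := K) (σ := σ) d m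
  obtain ⟨P, hP₀, hP⟩ := exists_polynomial_forall_mulVec_injective ((hA f₀ hf₀).mp h₀)
  exact ⟨P, hP₀, fun f hf hPf => (hA f hf).mpr (hP _ hPf)⟩

end

/-! ### A polynomial with independent partial derivatives -/

section

variable {σ R : Type*} [Fintype σ]

/-- The linear form `∑ i, a i * X i` with coefficient vector `a`; operators of degree `d` act on its
`d`-th power by evaluation at `a`. -/
noncomputable def linearForm [CommSemiring R] (a : σ → R) : MvPolynomial σ R :=
  ∑ i, C (a i) * X i

theorem isHomogeneous_linearForm [CommSemiring R] (a : σ → R) : (linearForm a).IsHomogeneous 1 :=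
  .sum _ _ _ fun i _ => isHomogeneous_C_mul_X (a i) i

theorem pderiv_linearForm_pow_succ [CommSemiring R] (a : σ → R) (i : σ) (m : ℕ) :
    pderiv i (linearForm a ^ (m + 1)) = ((m + 1) * a i) • linearForm a ^ m := by
  classical
  have h : pderiv i (linearForm a) = C (a i) := by
    simp [linearForm, pderiv_X, Pi.single_apply]
  rw [pderiv_pow, h, smul_eq_C_mul, Nat.add_sub_cancel]
  simp only [map_mul, map_add, map_natCast, map_one, Nat.cast_add, Nat.cast_one]
  ring

theorem diffOp_linearForm_pow [CommRing R] (a : σ → R) {m : ℕ} {θ : MvPolynomial σ R}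
    (hθ : θ.IsHomogeneous m) : diffOp θ (linearForm a ^ m) = C (m.factorial * eval a θ) := by
  have key := homogeneousSubmodule_le (V := fun m => LinearMap.eqLocus
      (diffOp.toLinearMap.flip (linearForm a ^ m))
      ((m.factorial : R) • Algebra.linearMap R _ ∘ₗ (aeval (R := R) a).toLinearMap))
    (by simp) fun m i θ hθ => by
      simp only [LinearMap.mem_eqLocus, LinearMap.flip_apply, AlgHom.toLinearMap_apply,
        LinearMap.smul_apply, LinearMap.comp_apply, Algebra.linearMap_apply, algebraMap_eq] at hθ ⊢
      rw [mul_comm, diffOp_mul, diffOp_X, Derivation.coeFn_coe, pderiv_linearForm_pow_succ,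
        map_smul, hθ]
      simp only [smul_eq_C_mul, map_mul, aeval_X, Nat.factorial_succ, Nat.cast_mul, Nat.cast_succ]
      ring
  simpa [smul_eq_C_mul] using key m hθ

end

section

variable {σ 𝕜 : Type*} [RCLike 𝕜]

open scoped ComplexOrder ComplexConjugate

theorem eval_map_conj {p : σ → 𝕜} (hp : ∀ i, 0 ≤ p i) (θ : MvPolynomial σ 𝕜) :
    eval p (map (starRingEnd 𝕜) θ) = conj (eval p θ) := by
  have hconj : p = fun i => conj (p i) := funext fun i => (RCLike.conj_eq_iff_im.mpr
    (RCLike.nonneg_iff.mp (hp i)).2).symm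
  rw [eval_map, eval₂_eq, eval_eq, map_sum]
  simp only [map_mul, map_prod, map_pow, ← congrFun hconj]

/-- With `d = 2 * m + r`, applying the operator `X i ^ r * conj θ` to `θ(∂) f = 0` gives
`∑ p ∈ S, p i ^ r * ‖θ p‖ ^ 2 = 0`. -/
theorem eval_eq_zero_of_diffOp_sum_linearForm_pow_eq_zero [Fintype σ] [Nonempty σ]
    {S : Finset (σ → 𝕜)} (hS : ∀ p ∈ S, ∀ i, 0 < p i) {d m : ℕ} (hmd : 2 * m ≤ d)
    {θ : MvPolynomial σ 𝕜} (hθ : θ.IsHomogeneous m)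
    (h : diffOp θ (∑ p ∈ S, linearForm p ^ d) = 0) {p : σ → 𝕜} (hp : p ∈ S) : eval p θ = 0 := by
  obtain ⟨i⟩ := ‹Nonempty σ›
  obtain ⟨r, rfl⟩ := Nat.exists_eq_add_of_le hmd
  have hη : (X i ^ r * map (starRingEnd 𝕜) θ * θ).IsHomogeneous (2 * m + r) := by
    have := ((isHomogeneous_X_pow i r).mul (hθ.map (starRingEnd 𝕜))).mul hθ
    convert this using 1
    ring
  have heval (q) (hq : q ∈ S) : eval q (X i ^ r * map (starRingEnd 𝕜) θ * θ) =
      q i ^ r * (‖eval q θ‖ : 𝕜) ^ 2 := by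
    rw [map_mul, map_mul, map_pow, eval_X, eval_map_conj fun i => (hS q hq i).le, mul_assoc,
      RCLike.conj_mul]
  have hsum : ∑ q ∈ S, q i ^ r * (‖eval q θ‖ : 𝕜) ^ 2 = 0 := by
    have h0 : diffOp (X i ^ r * map (starRingEnd 𝕜) θ * θ)
        (∑ q ∈ S, linearForm q ^ (2 * m + r)) = 0 := by rw [diffOp_mul, h, map_zero]
    simp only [map_sum, diffOp_linearForm_pow _ hη] at h0
    rw [← map_sum, ← Finset.mul_sum, C_eq_zero, mul_eq_zero, Finset.sum_congr rfl heval] at h0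
    exact h0.resolve_left (Nat.cast_ne_zero.mpr (Nat.factorial_ne_zero _))
  have hp0 := (Finset.sum_eq_zero_iff_of_nonneg fun q hq => mul_nonneg
    (pow_nonneg (hS q hq i).le r) (pow_nonneg (RCLike.ofReal_nonneg.mpr (norm_nonneg _)) 2)).mp
      hsum p hp
  simpa [(hS p hp i).ne'] using hp0

theorem exists_isHomogeneous_partialsIndep [Finite σ] [Nonempty σ] {d m : ℕ}
    (hmd : 2 * m ≤ d) : ∃ f : MvPolynomial σ 𝕜, f.IsHomogeneous d ∧ PartialsIndep f m := by
  classical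
  cases nonempty_fintype σ
  let A : Finset 𝕜 := (Finset.Icc 1 (m + 1)).map Nat.castEmbedding
  have hA (a) (ha : a ∈ A) : 0 < a := by
    obtain ⟨j, hj, rfl⟩ := Finset.mem_map.mp ha
    exact Nat.cast_pos.mpr (Finset.mem_Icc.mp hj).1
  refine ⟨∑ p ∈ Fintype.piFinset fun _ => A, linearForm p ^ d, .sum _ _ _ fun p _ => ?_,
    fun θ hθ h => ?_⟩
  · simpa using (isHomogeneous_linearForm p).pow d
  · refine eq_zero_of_eval_zero_at_prod_finset θ (fun _ => A) (fun i => ?_) fun p hp => ?_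
    · rw [Finset.card_map, Nat.card_Icc]
      exact Nat.lt_succ_of_le ((degreeOf_le_totalDegree θ i).trans hθ.totalDegree_le)
    · exact eval_eq_zero_of_diffOp_sum_linearForm_pow_eq_zero
        (fun q hq i => hA _ (Fintype.mem_piFinset.mp hq i)) hmd hθ h (Fintype.mem_piFinset.mpr hp)

end

/-- **Theorem.** For `n ≥ 1`, `d ≥ 4` and `1 ≤ k ≤ d/2 − 1` there is a nonempty
Zariski-open subset `U` of `R_d` (given by the nonvanishing of a polynomial `P` in the
coefficients, nonzero at some homogeneous `f₀` of degree `d`) such that for all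
`f, g ∈ U`: if the `k`-th order Milnor algebras `M^k(f)` and `M^k(g)` are isomorphic as
graded `ℂ`-algebras, then `V(f)` and `V(g)` are projectively equivalent, i.e.
`g = c · (f ∘ φ)` for some `φ ∈ GL_{n+1}(ℂ)` and `c ∈ ℂ∖{0}`. -/
theorem generic_milnor_algebra_determines_hypersurface
    {n d k : ℕ} (hn : 1 ≤ n) (hd : 4 ≤ d) (hk1 : 1 ≤ k) (hk : 2 * (k + 1) ≤ d) :
    ∃ P : MvPolynomial (Fin (n + 1) →₀ ℕ) ℂ,
      (∃ f₀ : MvPolynomial (Fin (n + 1)) ℂ, f₀.IsHomogeneous d ∧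
        eval (fun α => f₀.coeff α) P ≠ 0) ∧
      ∀ f g : MvPolynomial (Fin (n + 1)) ℂ,
        f.IsHomogeneous d → eval (fun α => f.coeff α) P ≠ 0 →
        g.IsHomogeneous d → eval (fun α => g.coeff α) P ≠ 0 →
        (∃ e : (MvPolynomial (Fin (n + 1)) ℂ ⧸ milnorIdeal f k) ≃ₐ[ℂ]
              (MvPolynomial (Fin (n + 1)) ℂ ⧸ milnorIdeal g k),
          ∀ m : ℕ, Submodule.map (e.toLinearEquiv : _ →ₗ[ℂ] _)
              (gradedPiece (milnorIdeal f k) m) = gradedPiece (milnorIdeal g k) m) →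
        ∃ (φ : (Matrix (Fin (n + 1)) (Fin (n + 1)) ℂ)ˣ) (c : ℂ), c ≠ 0 ∧
          g = MvPolynomial.C c * linSubst (φ : Matrix (Fin (n + 1)) (Fin (n + 1)) ℂ) f := by
  have : Nontrivial (Fin (n + 1)) := Fin.nontrivial_iff_two_le.mpr (by lia)
  obtain ⟨f₀, hf₀, hf₀_indep⟩ :=
    exists_isHomogeneous_partialsIndep (σ := Fin (n + 1)) (𝕜 := ℂ) hk
  obtain ⟨P, hP₀, hP⟩ := hf₀_indep.exists_polynomial hf₀
  refine ⟨P, ⟨f₀, hf₀, hP₀⟩, fun f g hf hPf hg hPg => ?_⟩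
  rintro ⟨e, he⟩
  exact exists_eq_C_mul_linSubst_of_milnorAlgebra_equiv hf hg (by lia) (hP f hf hPf)
    (hP g hg hPg).ne_zero e (he 1)
end

section
/- Let f ∈ ℂ[x_0,…,x_n]_d be a homogeneous polynomial such that V(f) is not a cone (Ann(f)_1 = 0), and let 1 ≤ k ≤ d−1. Then: (a) the transcendence degree over ℂ of the subfield of ℂ(x_0,…,x_n) generated by the k-th order partial derivatives {∂^α f : |α| = k} equals the rank, over the field ℂ(x_0,…,x_n), of the matrix (∂^{α+e_i} f)_{0≤i≤n, |α|=k} whose rows are indexed by the variables and columns by the multi-indices of length k; and (b) this rank is strictly less than n+1 if and only if for every linear form L ∈ A(f)_1 the multiplication map ×L^{d−k−1} : A(f)_1 → A(f)_{d−k} is not injective. -/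
/-!
In characteristic zero, algebraically independent elements of a field extension have linearly
independent differentials, so the transcendence degree of a subfield is the dimension of the span
of the differentials of its generators. In the basis `(dx_i)` of the differentials of
`ℂ(x_0,…,x_n)`, the differentials of the `k`-th partial derivatives of `f` are the columns of the
mixed Hessian, whence (a).

For (b), the generic rank fails to be full iff all maximal minors vanish, that is, iff at each point
`a` the matrix has a nonzero vector `c` in its left kernel. Put `L = ∑ a_i X_i` and
`q = ∑ c_i X_i`. The form `(L^{d-k-1} q)(f)` has degree `k`, and for `|α| = k` its derivative
`∂^α` is obtained by applying `L^{d-k-1}` to the form `∑ c_i ∂^{α+e_i} f` of degree `d-k-1`. By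
Euler's identity this gives `(d-k-1)!` times the value of that form at `a`, so `L^{d-k-1} q`
kills `f` iff `c` is in the left kernel at `a`.
-/

open MvPolynomial Module

/-- Apolarity action: the `ℂ`-linear map `q ↦ q(f)` sending a differential operator
`q ∈ Q = ℂ[X_0,…,X_n]` to its action on `f`; it sends the monomial `X^α` to `∂^α f`. -/
noncomputable def DopL {N : ℕ} (f : MvPolynomial (Fin N) ℂ) :
    MvPolynomial (Fin N) ℂ →ₗ[ℂ] MvPolynomial (Fin N) ℂ :=
  (MvPolynomial.basisMonomials (Fin N) ℂ).constr ℂ (fun α => pd (fun i => α i) f)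

/-- The multi-index of length `k` attached to an element of `Sym (Fin N) k`. -/
noncomputable def symIdx {N k : ℕ} (s : Sym (Fin N) k) : Fin N → ℕ :=
  fun i => Multiset.count i (s : Multiset (Fin N))

/-- The mixed Hessian `Hess^{(1,k)}_f = (∂^{α+e_i} f)_{0≤i≤n, |α|=k}`, with rows indexed
by the variables and columns by the multi-indices of length `k`, viewed as a matrix over
the field `ℂ(x_0,…,x_n)`. -/
noncomputable def mixedHess {N k : ℕ} (f : MvPolynomial (Fin N) ℂ) :
    Matrix (Fin N) (Sym (Fin N) k) (FractionRing (MvPolynomial (Fin N) ℂ)) :=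
  Matrix.of fun i s =>
    algebraMap (MvPolynomial (Fin N) ℂ) (FractionRing (MvPolynomial (Fin N) ℂ))
      (pd (symIdx s) (pderiv i f))

/-- The subfield of `ℂ(x_0,…,x_n)` generated over `ℂ` by the `k`-th order partial
derivatives of `f`. -/
noncomputable def partialsField {N : ℕ} (f : MvPolynomial (Fin N) ℂ) (k : ℕ) :
    IntermediateField ℂ (FractionRing (MvPolynomial (Fin N) ℂ)) :=
  IntermediateField.adjoin ℂ
    {y | ∃ α : Fin N → ℕ, (∑ i, α i) = k ∧
      y = algebraMap (MvPolynomial (Fin N) ℂ) (FractionRing (MvPolynomial (Fin N) ℂ))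
            (pd α f)}

section Differentials

open KaehlerDifferential

section FormallyEtale

variable (R K σ : Type*) [CommRing R] [CommRing K] [Algebra R K] [Algebra (MvPolynomial σ R) K]
  [IsScalarTower R (MvPolynomial σ R) K] [Algebra.FormallyEtale (MvPolynomial σ R) K]

/-- The basis `(dX_i)` of the differentials of an algebra that is formally étale over
`R[X_i : i ∈ σ]`, such as its fraction field. -/
noncomputable def differentialBasis : Basis σ K (Ω[K⁄R]) :=
  ((mvPolynomialBasis R σ).baseChange K).map
    (tensorKaehlerEquivOfFormallyEtale R (MvPolynomial σ R) K)

variable {R σ}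

lemma differentialBasis_apply (i : σ) :
    differentialBasis R K σ i = D R K (algebraMap (MvPolynomial σ R) K (X i)) := by
  simp [differentialBasis]

lemma differentialBasis_repr_D (p : MvPolynomial σ R) (i : σ) :
    (differentialBasis R K σ).repr (D R K (algebraMap (MvPolynomial σ R) K p)) i =
      algebraMap (MvPolynomial σ R) K (pderiv i p) := by
  simp [differentialBasis, tensorKaehlerEquivOfFormallyEtale_symm_D_algebraMap,
    mvPolynomialBasis_repr_apply, Algebra.smul_def]

end FormallyEtale

variable {F K : Type*} [Field F] [Field K] [Algebra F K]

open scoped IntermediateField.algebraAdjoinAdjoin in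
lemma formallyEtale_aeval {ι : Type*} {x : ι → K} (hx : AlgebraicIndependent F x)
    [Algebra.IsSeparable (IntermediateField.adjoin F (Set.range x)) K] :
    (aeval x : MvPolynomial ι F →ₐ[F] K).toRingHom.FormallyEtale := by
  let e := hx.aevalEquiv.toRingEquiv
  algebraize [(e : MvPolynomial ι F →+* Algebra.adjoin F (Set.range x))]
  have h₁ : (e : MvPolynomial ι F →+* Algebra.adjoin F (Set.range x)).FormallyEtale :=
    Algebra.FormallyEtale.of_equiv (AlgEquiv.ofBijective (Algebra.ofId _ _) e.bijective)
  have h₂ : Algebra.FormallyEtale (Algebra.adjoin F (Set.range x))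
      (IntermediateField.adjoin F (Set.range x)) :=
    .of_isLocalization (nonZeroDivisors _)
  have h₃ : Algebra.FormallyEtale (IntermediateField.adjoin F (Set.range x)) K :=
    .of_isSeparable _ _
  have h₄ := Algebra.FormallyEtale.comp (Algebra.adjoin F (Set.range x))
    (IntermediateField.adjoin F (Set.range x)) K
  convert h₁.comp (RingHom.formallyEtale_algebraMap.2 h₄)
  exact RingHom.ext fun p => (hx.algebraMap_aevalEquiv p).symm

lemma exists_basis_eq_D {ι : Type*} {x : ι → K} (hx : AlgebraicIndependent F x)
    [Algebra.IsSeparable (IntermediateField.adjoin F (Set.range x)) K] :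
    ∃ b : Basis ι K (Ω[K⁄F]), ∀ i, b i = D F K (x i) := by
  let := (aeval x : MvPolynomial ι F →ₐ[F] K).toRingHom.toAlgebra
  have : IsScalarTower F (MvPolynomial ι F) K :=
    .of_algebraMap_eq' (aeval x : MvPolynomial ι F →ₐ[F] K).comp_algebraMap.symm
  have : Algebra.FormallyEtale (MvPolynomial ι F) K := formallyEtale_aeval hx
  refine ⟨differentialBasis F K ι, fun i => ?_⟩
  rw [differentialBasis_apply]
  exact congrArg (D F K) (aeval_X x i)

lemma exists_basis_eq_D_of_isTranscendenceBasis [CharZero F] {ι : Type*} {x : ι → K}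
    (hx : IsTranscendenceBasis F x) :
    ∃ b : Basis ι K (Ω[K⁄F]), ∀ i, b i = D F K (x i) := by
  have := hx.isAlgebraic_field
  exact exists_basis_eq_D hx.1

lemma linearIndependent_D_of_algebraicIndependent [CharZero F] {ι : Type*} {x : ι → K}
    (hx : AlgebraicIndependent F x) : LinearIndependent K fun i => D F K (x i) := by
  obtain ⟨t, hxt, ht⟩ := exists_isTranscendenceBasis_superset
    ((algebraicIndependent_subtype_range hx.injective).2 hx)
  obtain ⟨b, hb⟩ := exists_basis_eq_D_of_isTranscendenceBasis ht
  have := b.linearIndependent.comp (fun i => (⟨x i, hxt ⟨i, rfl⟩⟩ : t)) fun i j h =>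
    hx.injective (congrArg Subtype.val h)
  simpa [Function.comp_def, hb] using this

lemma D_mem_span_of_mem_adjoin {s : Set K} {y : K} (hy : y ∈ IntermediateField.adjoin F s) :
    D F K y ∈ Submodule.span K (D F K '' s) := by
  induction hy using IntermediateField.adjoin_induction with
  | mem y hy => exact Submodule.subset_span ⟨y, hy, rfl⟩
  | algebraMap r => simp
  | add y z _ _ hy hz => simpa using add_mem hy hz
  | inv y _ hy => simpa only [Derivation.leibniz_inv] using Submodule.smul_mem _ _ hy
  | mul y z _ _ hy hz =>
    simpa only [Derivation.leibniz] using
      add_mem (Submodule.smul_mem _ _ hz) (Submodule.smul_mem _ _ hy)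

lemma D_algebraMap_mem_span [CharZero F] {E : Type*} [Field E] [Algebra F E] [Algebra E K]
    [IsScalarTower F E K] {ι : Type*} {x : ι → E} (hx : IsTranscendenceBasis F x) (y : E) :
    D F K (algebraMap E K y) ∈
      Submodule.span K (Set.range fun i => D F K (algebraMap E K (x i))) := by
  obtain ⟨b, hb⟩ := exists_basis_eq_D_of_isTranscendenceBasis hx
  set W := Submodule.span K (Set.range fun i => D F K (algebraMap E K (x i)))
  have hW : Submodule.span E (Set.range b) ≤
      (W.restrictScalars E).comap (KaehlerDifferential.map F F E K) := by
    rw [Submodule.span_le]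
    rintro _ ⟨i, rfl⟩
    simpa [hb] using Submodule.subset_span (Set.mem_range_self i)
  simpa using hW (b.mem_span (D F E y))

lemma span_D_image_eq [CharZero F] (s : Set K) {ι : Type*}
    {x : ι → IntermediateField.adjoin F s} (hx : IsTranscendenceBasis F x) :
    Submodule.span K (D F K '' s) = Submodule.span K (Set.range fun i => D F K (x i : K)) := by
  refine le_antisymm (Submodule.span_le.2 ?_) (Submodule.span_le.2 ?_)
  · rintro _ ⟨y, hy, rfl⟩
    exact D_algebraMap_mem_span hx ⟨y, IntermediateField.subset_adjoin F s hy⟩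
  · rintro _ ⟨i, rfl⟩
    exact D_mem_span_of_mem_adjoin (x i).2

lemma trdeg_adjoin [CharZero F] (s : Set K) :
    Algebra.trdeg F (IntermediateField.adjoin F s) =
      Module.rank K (Submodule.span K (D F K '' s)) := by
  obtain ⟨t, ht⟩ := exists_isTranscendenceBasis F (IntermediateField.adjoin F s)
  have hli : LinearIndependent K fun i : t => D F K (i : K) :=
    linearIndependent_D_of_algebraicIndependent
      (ht.1.map' (f := (IntermediateField.adjoin F s).val) Subtype.val_injective)
  rw [← ht.cardinalMk_eq_trdeg, span_D_image_eq s ht, rank_span hli,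
    Cardinal.mk_range_eq _ hli.injective]

theorem trdeg_adjoin_range_eq_rank_jacobian [CharZero F] {σ ι : Type*} [Finite σ] [Fintype ι]
    [Algebra (MvPolynomial σ F) K] [IsScalarTower F (MvPolynomial σ F) K]
    [Algebra.FormallyEtale (MvPolynomial σ F) K] (p : ι → MvPolynomial σ F) :
    Algebra.trdeg F (IntermediateField.adjoin F
        (Set.range fun j => algebraMap (MvPolynomial σ F) K (p j))) =
      (Matrix.of fun i j => algebraMap (MvPolynomial σ F) K (pderiv i (p j))).rank := by
  let e := (differentialBasis F K σ).equivFun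
  have hcol : (Matrix.of fun i j => algebraMap (MvPolynomial σ F) K (pderiv i (p j))).col =
      e ∘ fun j => D F K (algebraMap _ K (p j)) := by
    ext j i
    simp [e, differentialBasis_repr_D]
  have : Module.Finite K (Ω[K⁄F]) := .of_basis (differentialBasis F K σ)
  rw [trdeg_adjoin, ← finrank_eq_rank, Matrix.rank_eq_finrank_span_cols, hcol, Set.range_comp e,
    Submodule.span_image_linearEquiv, LinearEquiv.finrank_map_eq, ← Set.range_comp]
  rfl

lemma exists_fin_isTranscendenceBasis {r : ℕ} (h : Algebra.trdeg F K = r) :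
    ∃ x : Fin r → K, IsTranscendenceBasis F x := by
  obtain ⟨s, hs⟩ := exists_isTranscendenceBasis F K
  rw [← hs.cardinalMk_eq_trdeg] at h
  obtain ⟨e⟩ := Cardinal.mk_eq_nat_iff.1 h
  exact ⟨_, hs.comp_equiv e.symm⟩

end Differentials

section GenericRank

variable {K m S : Type*} [Field K] [Fintype m] [Fintype S]

lemma rank_lt_card_iff_exists_vecMul_eq_zero (M : Matrix m S K) :
    M.rank < Fintype.card m ↔ ∃ v ≠ 0, Matrix.vecMul v M = 0 := by
  have hle := M.rank_le_card_height
  calc M.rank < Fintype.card m ↔ ¬ LinearIndependent K M.row := by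
        rw [linearIndependent_iff_card_eq_finrank_span, Set.finrank,
          ← Matrix.rank_eq_finrank_span_row]
        lia
    _ ↔ ∃ v ≠ 0, Matrix.vecMul v M = 0 := by
        simp [← Matrix.vecMul_injective_iff, ← Matrix.coe_vecMulLinear,
          injective_iff_map_eq_zero, and_comm]

lemma rank_lt_card_iff_forall_det_submatrix_eq_zero [DecidableEq m] (M : Matrix m S K) :
    M.rank < Fintype.card m ↔ ∀ e : m → S, (M.submatrix id e).det = 0 := by
  refine ⟨fun h e => ?_, fun h => lt_of_le_of_ne M.rank_le_card_height fun heq => ?_⟩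
  · obtain ⟨v, hv, hvM⟩ := (rank_lt_card_iff_exists_vecMul_eq_zero M).1 h
    exact Matrix.exists_vecMul_eq_zero_iff.1 ⟨v, hv, funext fun j => congrFun hvM (e j)⟩
  · obtain ⟨κ, a, -, hspan, hli⟩ := exists_linearIndependent' K M.col
    have := hli.finite
    have := Fintype.ofFinite κ
    have hcard : Fintype.card m = Fintype.card κ := by
      rw [← finrank_span_eq_card hli, hspan, ← Matrix.rank_eq_finrank_span_cols, heq]
    let g := Fintype.equivOfCardEq hcard
    have hunit : LinearIndependent K (M.submatrix id (a ∘ g)).col := hli.comp g g.injective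
    rw [Matrix.linearIndependent_cols_iff_isUnit, Matrix.isUnit_iff_isUnit_det, h] at hunit
    exact not_isUnit_zero hunit

lemma rank_map_algebraMap_lt_card_iff_forall_rank_map_eval_lt_card {R σ : Type*} [Field R]
    [Infinite R] [Algebra (MvPolynomial σ R) K] [FaithfulSMul (MvPolynomial σ R) K]
    (M : Matrix m S (MvPolynomial σ R)) :
    (M.map (algebraMap _ K)).rank < Fintype.card m ↔
      ∀ a : σ → R, (M.map (eval a)).rank < Fintype.card m := by
  classical
  simp_rw [rank_lt_card_iff_forall_det_submatrix_eq_zero, Matrix.submatrix_map,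
    ← RingHom.mapMatrix_apply, ← RingHom.map_det, FaithfulSMul.algebraMap_eq_zero_iff]
  rw [forall_comm]
  simp_rw [MvPolynomial.funext_iff, map_zero]

end GenericRank

section Apolarity

section LinearForms

variable {σ R : Type*} [CommRing R] [Fintype σ]

variable (σ R) in
/-- The linear form `∑ i, a i • X i`, as a linear function of its coefficient vector `a`. -/
noncomputable def linForm : (σ → R) →ₗ[R] MvPolynomial σ R :=
  Fintype.linearCombination R X

lemma linForm_apply (a : σ → R) : linForm σ R a = ∑ i, a i • X i := rfl

lemma range_linForm : LinearMap.range (linForm σ R) = homogeneousSubmodule σ R 1 := by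
  rw [linForm, Fintype.range_linearCombination, homogeneousSubmodule_one_eq_span_X]

lemma linForm_injective : Function.Injective (linForm σ R) :=
  (linearIndependent_X σ R).fintypeLinearCombination_injective

lemma isHomogeneous_linForm (a : σ → R) : (linForm σ R a).IsHomogeneous 1 :=
  range_linForm.le ⟨a, rfl⟩

end LinearForms

lemma pderiv_pderiv_comm {σ R : Type*} [CommSemiring R] (i j : σ) (p : MvPolynomial σ R) :
    pderiv i (pderiv j p) = pderiv j (pderiv i p) := by
  ext m
  by_cases h : i = j
  · rw [h]
  · simp [coeff_pderiv, add_right_comm, h, Ne.symm h, mul_right_comm]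

variable {N : ℕ}

/-- The action `α ↦ ∂^α` as a homomorphism from the multiplicatively written monoid of
multi-indices: the product of the commuting powers of the partial derivatives, in no
preferred order, unlike in `pd`. -/
noncomputable def pdHom :
    (Fin N → Multiplicative ℕ) →* Module.End ℂ (MvPolynomial (Fin N) ℂ) :=
  MonoidHom.noncommPiCoprod
    (fun i => powersHom (Module.End ℂ (MvPolynomial (Fin N) ℂ)) (pderiv i).toLinearMap)
    fun i j _ m n => Commute.pow_pow (LinearMap.ext (pderiv_pderiv_comm i j)) m n

lemma pd_eq_pdHom (α : Fin N → ℕ) : pd α = pdHom fun i => .ofAdd (α i) := by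
  simp [pd, pdHom, MonoidHom.noncommPiCoprod, Finset.noncommProd, List.ofFn_eq_map]

lemma pd_zero : pd (0 : Fin N → ℕ) = 1 := by
  rw [pd_eq_pdHom]; exact map_one pdHom

lemma pd_add (α β : Fin N → ℕ) : pd (α + β) = pd α * pd β := by
  simp_rw [pd_eq_pdHom, ← map_mul]; rfl

lemma pd_single (i : Fin N) : pd (Pi.single i 1) = (pderiv (R := ℂ) i).toLinearMap := by
  rw [pd_eq_pdHom]
  exact (MonoidHom.noncommPiCoprod_mulSingle
    (ϕ := fun i => powersHom _ (pderiv (R := ℂ) i).toLinearMap)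
    i (.ofAdd 1)).trans (pow_one _)

lemma DopL_monomial (f : MvPolynomial (Fin N) ℂ) (α : Fin N →₀ ℕ) (c : ℂ) :
    DopL f (monomial α c) = c • pd α f := by
  have := (basisMonomials (Fin N) ℂ).constr_basis ℂ (fun α => pd (fun i => α i) f) α
  rw [coe_basisMonomials] at this
  rw [← mul_one c, ← smul_eq_mul, ← smul_monomial, map_smul, smul_eq_mul, mul_one]
  exact congrArg _ this

lemma DopL_one (f : MvPolynomial (Fin N) ℂ) : DopL f 1 = f := by
  simpa [pd_zero] using DopL_monomial f 0 1

lemma DopL_X (f : MvPolynomial (Fin N) ℂ) (i : Fin N) : DopL f (X i) = pderiv i f := by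
  simpa [X, Finsupp.single_eq_pi_single, pd_single] using DopL_monomial f (Finsupp.single i 1) 1

lemma DopL_mul (f p q : MvPolynomial (Fin N) ℂ) : DopL f (p * q) = DopL (DopL f q) p := by
  induction p using MvPolynomial.induction_on' with
  | add p p' hp hp' => rw [add_mul, map_add, map_add, hp, hp']
  | monomial α c =>
    induction q using MvPolynomial.induction_on' with
    | add q q' hq hq' => simp_rw [mul_add, map_add, hq, hq', DopL_monomial, map_add, smul_add]
    | monomial β c' =>
      rw [monomial_mul, DopL_monomial, DopL_monomial, DopL_monomial, Finsupp.coe_add, pd_add,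
        map_smul, mul_smul]
      rfl

lemma DopL_linForm (f : MvPolynomial (Fin N) ℂ) (a : Fin N → ℂ) :
    DopL f (linForm _ _ a) = ∑ i, a i • pderiv i f := by
  simp [linForm_apply, DopL_X]

lemma isHomogeneous_DopL {f q : MvPolynomial (Fin N) ℂ} {d e : ℕ} (hf : f.IsHomogeneous d)
    (hq : q.IsHomogeneous e) : (DopL f q).IsHomogeneous (d - e) := by
  rw [← mem_homogeneousSubmodule, ← homogeneousSubmodule_one_pow] at hq
  induction hq using Submodule.pow_induction_on_left' with
  | algebraMap r =>
    rw [Algebra.algebraMap_eq_smul_one, map_smul, DopL_one]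
    exact (homogeneousSubmodule _ _ _).smul_mem r hf
  | add p q e _ _ hp hq => simpa using hp.add hq
  | mem_mul p hp e q _ hq =>
    obtain ⟨a, rfl⟩ := range_linForm.ge hp
    rw [DopL_mul, DopL_linForm, Nat.sub_succ']
    exact Submodule.sum_mem (homogeneousSubmodule _ _ _) fun i _ =>
      Submodule.smul_mem _ _ hq.pderiv

lemma DopL_linForm_pow {f : MvPolynomial (Fin N) ℂ} {m : ℕ} (hf : f.IsHomogeneous m)
    (a : Fin N → ℂ) : DopL f (linForm _ _ a ^ m) = C (m.factorial * eval a f) := by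
  induction m generalizing f with
  | zero =>
    rw [← totalDegree_zero_iff_isHomogeneous, totalDegree_eq_zero_iff_eq_C] at hf
    rw [hf]
    simp [DopL_one]
  | succ m ih =>
    have hE : eval a (DopL f (linForm _ _ a)) = (m + 1 : ℕ) * eval a f := by
      simpa [DopL_linForm, smul_eval] using congrArg (eval a) hf.sum_X_mul_pderiv
    rw [pow_succ, DopL_mul, ih (isHomogeneous_DopL hf (isHomogeneous_linForm a)), hE,
      Nat.factorial_succ]
    push_cast
    ring_nf

lemma pd_eq_DopL (α : Fin N → ℕ) (f : MvPolynomial (Fin N) ℂ) :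
    pd α f = DopL f (monomial (Finsupp.equivFunOnFinite.symm α) 1) := by
  simp [DopL_monomial]

lemma pd_DopL (α : Fin N → ℕ) (f q : MvPolynomial (Fin N) ℂ) :
    pd α (DopL f q) = DopL (pd α f) q := by
  rw [pd_eq_DopL, pd_eq_DopL, ← DopL_mul, ← DopL_mul, mul_comm]

lemma pd_pderiv (α : Fin N → ℕ) (i : Fin N) (f : MvPolynomial (Fin N) ℂ) :
    pd α (pderiv i f) = pderiv i (pd α f) := by
  rw [← DopL_X, ← DopL_X, pd_DopL]

lemma isHomogeneous_pd {f : MvPolynomial (Fin N) ℂ} {d : ℕ} (hf : f.IsHomogeneous d)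
    (α : Fin N → ℕ) : (pd α f).IsHomogeneous (d - ∑ i, α i) := by
  rw [pd_eq_DopL]
  exact isHomogeneous_DopL hf (isHomogeneous_monomial 1 (by simp [Finsupp.degree_eq_sum]))

lemma sum_symIdx {k : ℕ} (s : Sym (Fin N) k) : ∑ i, symIdx s i = k :=
  (Sym.equivNatSumOfFintype (Fin N) k s).2

lemma range_symIdx (N k : ℕ) :
    Set.range (symIdx : Sym (Fin N) k → Fin N → ℕ) = {α | ∑ i, α i = k} :=
  ((Sym.equivNatSumOfFintype (Fin N) k).surjective.range_comp Subtype.val).trans Subtype.range_val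

lemma DopL_eq_zero_of_forall_pd_symIdx_eq_zero {f q : MvPolynomial (Fin N) ℂ} {k : ℕ}
    (hf : ∀ s : Sym (Fin N) k, pd (symIdx s) f = 0) (hq : q.IsHomogeneous k) :
    DopL f q = 0 := by
  rw [q.as_sum, map_sum]
  refine Finset.sum_eq_zero fun α hα => ?_
  obtain ⟨s, hs⟩ : ⇑α ∈ Set.range (symIdx : Sym (Fin N) k → Fin N → ℕ) := by
    rw [range_symIdx, Set.mem_ofPred_eq, ← Finsupp.degree_eq_sum, Finsupp.degree_eq_weight_one]
    exact hq (mem_support_iff.1 hα)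
  rw [DopL_monomial, ← hs, hf, smul_zero]

lemma eq_zero_of_forall_pd_symIdx_eq_zero {f : MvPolynomial (Fin N) ℂ} {k : ℕ}
    (hf : f.IsHomogeneous k) (h : ∀ s : Sym (Fin N) k, pd (symIdx s) f = 0) : f = 0 := by
  refine MvPolynomial.funext fun a => ?_
  have := DopL_eq_zero_of_forall_pd_symIdx_eq_zero h
    (by simpa using (isHomogeneous_linForm a).pow k)
  rw [DopL_linForm_pow hf, C_eq_zero] at this
  simpa [Nat.factorial_ne_zero] using this

/-- The mixed Hessian `(∂^{α+e_i} f)` with its entries in the polynomial ring, so that it can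
be evaluated at points. -/
noncomputable def polyMixedHess (f : MvPolynomial (Fin N) ℂ) (k : ℕ) :
    Matrix (Fin N) (Sym (Fin N) k) (MvPolynomial (Fin N) ℂ) :=
  Matrix.of fun i s => pd (symIdx s) (pderiv i f)

lemma pd_symIdx_DopL_linForm_pow_mul {d k : ℕ} {f : MvPolynomial (Fin N) ℂ}
    (hf : f.IsHomogeneous d) (a c : Fin N → ℂ) (s : Sym (Fin N) k) :
    pd (symIdx s) (DopL f (linForm _ _ a ^ (d - k - 1) * linForm _ _ c)) =
      C ((d - k - 1).factorial * Matrix.vecMul c ((polyMixedHess f k).map (eval a)) s) := by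
  have hs := isHomogeneous_DopL (isHomogeneous_pd hf (symIdx s)) (isHomogeneous_linForm c)
  rw [sum_symIdx] at hs
  rw [pd_DopL, DopL_mul, DopL_linForm_pow hs]
  simp [DopL_linForm, smul_eval, Matrix.vecMul, dotProduct, polyMixedHess, pd_pderiv]

lemma DopL_linForm_pow_mul_eq_zero_iff {d k : ℕ} {f : MvPolynomial (Fin N) ℂ}
    (hf : f.IsHomogeneous d) (hk : k + 1 ≤ d) (a c : Fin N → ℂ) :
    DopL f (linForm _ _ a ^ (d - k - 1) * linForm _ _ c) = 0 ↔
      Matrix.vecMul c ((polyMixedHess f k).map (eval a)) = 0 := by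
  have hdeg := isHomogeneous_DopL hf
    (((isHomogeneous_linForm a).pow (d - k - 1)).mul (isHomogeneous_linForm c))
  rw [show d - (1 * (d - k - 1) + 1) = k by lia] at hdeg
  constructor
  · intro h
    ext s
    simpa [h, Nat.factorial_ne_zero] using pd_symIdx_DopL_linForm_pow_mul hf a c s
  · intro h
    refine eq_zero_of_forall_pd_symIdx_eq_zero hdeg fun s => ?_
    simp [pd_symIdx_DopL_linForm_pow_mul hf, h]

end Apolarity

section PartialsField

variable {N k : ℕ} (f : MvPolynomial (Fin N) ℂ)

lemma partialsField_eq_adjoin_range : partialsField f k =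
    IntermediateField.adjoin ℂ (Set.range fun s : Sym (Fin N) k =>
      algebraMap _ (FractionRing (MvPolynomial (Fin N) ℂ)) (pd (symIdx s) f)) := by
  have hα (α : Fin N → ℕ) : ∑ i, α i = k ↔ ∃ s : Sym (Fin N) k, symIdx s = α :=
    Set.ext_iff.1 (range_symIdx N k).symm α
  rw [partialsField]
  congr 1
  ext y
  simp [hα, eq_comm]

lemma mixedHess_eq_map_polyMixedHess :
    mixedHess (k := k) f = (polyMixedHess f k).map (algebraMap _ _) := rfl

lemma trdeg_partialsField :
    Algebra.trdeg ℂ (partialsField f k) = (mixedHess (k := k) f).rank := by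
  rw [partialsField_eq_adjoin_range, trdeg_adjoin_range_eq_rank_jacobian]
  simp_rw [mixedHess, pd_pderiv]

end PartialsField

theorem polar_image_dim_eq_mixed_hessian_rank_general {N d k : ℕ}
    (f : MvPolynomial (Fin N) ℂ) (hf : f.IsHomogeneous d) (hk : k + 1 ≤ d) :
    (∃ x : Fin ((mixedHess (k := k) f).rank) → (partialsField f k),
      IsTranscendenceBasis ℂ x) ∧
    ((mixedHess (k := k) f).rank < N ↔
      ∀ L ∈ homogeneousSubmodule (Fin N) ℂ 1,
        ∃ q ∈ homogeneousSubmodule (Fin N) ℂ 1,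
          q ≠ 0 ∧ DopL f (L ^ (d - k - 1) * q) = 0) := by
  refine ⟨exists_fin_isTranscendenceBasis (trdeg_partialsField f), ?_⟩
  have hgeneric := rank_map_algebraMap_lt_card_iff_forall_rank_map_eval_lt_card
    (K := FractionRing (MvPolynomial (Fin N) ℂ)) (polyMixedHess f k)
  rw [← mixedHess_eq_map_polyMixedHess, Fintype.card_fin] at hgeneric
  calc (mixedHess (k := k) f).rank < N
      ↔ ∀ a, ∃ c ≠ 0, Matrix.vecMul c ((polyMixedHess f k).map (eval a)) = 0 := by
        simpa only [← rank_lt_card_iff_exists_vecMul_eq_zero, Fintype.card_fin] using hgeneric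
    _ ↔ ∀ a, ∃ c, linForm _ ℂ c ≠ 0 ∧
          DopL f (linForm _ ℂ a ^ (d - k - 1) * linForm _ ℂ c) = 0 := by
        simp_rw [DopL_linForm_pow_mul_eq_zero_iff hf hk, map_ne_zero_iff _ linForm_injective]
    _ ↔ _ := by
        simp_rw [← range_linForm, LinearMap.mem_range, exists_exists_eq_and, forall_exists_index,
          forall_apply_eq_imp_iff]

/-- **Theorem.** Let `f` be homogeneous of degree `d` with `V(f)` not a cone
(`Ann(f)_1 = 0`) and let `1 ≤ k ≤ d−1`.  Then (a) the transcendence degree over `ℂ` of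
the subfield of `ℂ(x_0,…,x_n)` generated by the `k`-th partial derivatives of `f` equals
the rank of the mixed Hessian matrix `(∂^{α+e_i}f)` over `ℂ(x_0,…,x_n)` (i.e. this field
has a transcendence basis indexed by `Fin rank`); and (b) this rank is `< n+1` iff for
every linear form `L ∈ A(f)_1 = Q_1` the multiplication map
`×L^{d−k−1} : A(f)_1 → A(f)_{d−k}` is not injective. -/
theorem polar_image_dim_eq_mixed_hessian_rank
    {n d k : ℕ} (f : MvPolynomial (Fin (n + 1)) ℂ) (hf : f.IsHomogeneous d)
    (hcone : homogeneousSubmodule (Fin (n + 1)) ℂ 1 ⊓ LinearMap.ker (DopL f) = ⊥)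
    (hk1 : 1 ≤ k) (hk : k + 1 ≤ d) :
    (∃ x : Fin ((mixedHess (k := k) f).rank) → (partialsField f k),
      IsTranscendenceBasis ℂ x) ∧
    ((mixedHess (k := k) f).rank < n + 1 ↔
      ∀ L ∈ homogeneousSubmodule (Fin (n + 1)) ℂ 1,
        ∃ q ∈ homogeneousSubmodule (Fin (n + 1)) ℂ 1,
          q ≠ 0 ∧ DopL f (L ^ (d - k - 1) * q) = 0) :=
  polar_image_dim_eq_mixed_hessian_rank_general f hf hk
end
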